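/- Let T be the odd unimodular lattice ⟨1⟩ ⊕ U ⊕ E8 of rank 11 and let T₀ be its even sublattice, consisting of all vectors of even norm. Then every isometry of T maps T₀ onto T₀, and the restriction map O(T) → O(T₀), f ↦ f|_{T₀}, is a group isomorphism; in particular every isometry of T₀ extends uniquely to an isometry of T. -/

import Mathlib

open Matrix

/-- The hyperbolic plane `U`, with Gram matrix `[[0,1],[1,0]]`. -/
abbrev latU : Matrix (Fin 2) (Fin 2) ℤ := !![0, 1; 1, 0]

/-- The negative definite even unimodular lattice `E₈` (negative of the Cartan matrix). -/
abbrev latE8 : Matrix (Fin 8) (Fin 8) ℤ :=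
  !![-2,  0,  1,  0,  0,  0,  0,  0;
      0, -2,  0,  1,  0,  0,  0,  0;
      1,  0, -2,  1,  0,  0,  0,  0;
      0,  1,  1, -2,  1,  0,  0,  0;
      0,  0,  0,  1, -2,  1,  0,  0;
      0,  0,  0,  0,  1, -2,  1,  0;
      0,  0,  0,  0,  0,  1, -2,  1;
      0,  0,  0,  0,  0,  0,  1, -2]

/-- Orthogonal direct sum of two lattices (block-diagonal Gram matrix). -/
def dsum {a b : ℕ} (A : Matrix (Fin a) (Fin a) ℤ) (B : Matrix (Fin b) (Fin b) ℤ) :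
    Matrix (Fin (a + b)) (Fin (a + b)) ℤ :=
  Matrix.reindex finSumFinEquiv finSumFinEquiv (Matrix.fromBlocks A 0 0 B)

/-- The bilinear form of the lattice with Gram matrix `G` : `x ⋅ y = xᵀ G y`. -/
def bform {n : ℕ} (G : Matrix (Fin n) (Fin n) ℤ) (x y : Fin n → ℤ) : ℤ :=
  x ⬝ᵥ G.mulVec y


/-- `T = ⟨1⟩ ⊕ U ⊕ E8`, an odd unimodular lattice of rank 11. -/
def gramT : Matrix (Fin 11) (Fin 11) ℤ := dsum (dsum !![(1 : ℤ)] latU) latE8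

/-- An isometry of the lattice `(ℤ¹¹, G)`: a ℤ-module automorphism preserving the form. -/
def IsIsometry {n : ℕ} (G : Matrix (Fin n) (Fin n) ℤ)
    (f : (Fin n → ℤ) ≃ₗ[ℤ] (Fin n → ℤ)) : Prop :=
  ∀ x y, bform G (f x) (f y) = bform G x y

/-!
Let `G` be a symmetric integer matrix of odd determinant and odd size, and write `x ⋅ y` for its
form. The norm is additive modulo 2, so it is given there by pairing with a characteristic
vector `w`. The norm of `w` is odd: otherwise `G + (G w)(G w)ᵀ`, which is alternating modulo 2 and
of odd size, would have odd determinant `det G * (1 + w ⋅ w)`. Hence `w` lies outside the even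
sublattice `S`, and the lattice is the union of `S` and `w + S`.

A vector `v ∈ S` pairing evenly with `S` also pairs evenly with `w`, hence with every vector, so
`v ∈ 2ℤⁿ`. Thus `2ℤⁿ` consists of the vectors of `S` pairing evenly with `S`. An isometry
of `S` must preserve it, and therefore extends to `ℤⁿ` by dividing by 2.
-/

section Extension

variable {R M M' : Type*} [CommSemiring R] [AddCommMonoid M] [AddCommMonoid M']
  [Module R M] [Module R M'] {N : Submodule R M} {N' : Submodule R M'} {a : R}

theorem linearMap_eq_of_eqOn_of_smul_mem (ha : IsSMulRegular M' a) (haN : ∀ x : M, a • x ∈ N)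
    {f f' : M →ₗ[R] M'} (h : Set.EqOn f f' N) : f = f' :=
  LinearMap.ext fun x ↦ ha <| by simpa only [map_smul] using h (haN x)

theorem exists_linearMap_extension_of_smul_mem (ha : IsSMulRegular M' a)
    (haN : ∀ x : M, a • x ∈ N) (g : N →ₗ[R] M')
    (hg : ∀ x : M, ∃ y : M', a • y = g ⟨a • x, haN x⟩) :
    ∃ f : M →ₗ[R] M', ∀ x : N, f x = g x := by
  choose f hf using hg
  refine ⟨{ toFun := f, map_add' := fun x y ↦ ha ?_, map_smul' := fun c x ↦ ha ?_ },
    fun x ↦ ha ?_⟩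
  · simp only [smul_add, hf, ← map_add, AddMemClass.mk_add_mk]
  · simp only [RingHom.id_apply, smul_comm a c, hf, ← map_smul, SetLike.mk_smul_mk]
  · exact (hf x).trans (map_smul g a x)

theorem exists_linearEquiv_extension_of_smul_mem
    (ha : IsSMulRegular M a) (ha' : IsSMulRegular M' a)
    (haN : ∀ x : M, a • x ∈ N) (haN' : ∀ x : M', a • x ∈ N') (g : N ≃ₗ[R] N')
    (hg : ∀ x : M, ∃ y : M', a • y = g ⟨a • x, haN x⟩)
    (hg' : ∀ x : M', ∃ y : M, a • y = g.symm ⟨a • x, haN' x⟩) :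
    ∃ f : M ≃ₗ[R] M', ∀ x : N, f x = g x := by
  obtain ⟨f, hf⟩ := exists_linearMap_extension_of_smul_mem ha' haN (N'.subtype ∘ₗ g) hg
  obtain ⟨f', hf'⟩ := exists_linearMap_extension_of_smul_mem ha haN' (N.subtype ∘ₗ g.symm) hg'
  have right_inv : f ∘ₗ f' = .id := linearMap_eq_of_eqOn_of_smul_mem ha' haN' fun x hx ↦ by
    simpa [hf] using congrArg f (hf' ⟨x, hx⟩)
  have left_inv : f' ∘ₗ f = .id := linearMap_eq_of_eqOn_of_smul_mem ha haN fun x hx ↦ by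
    simpa [hf'] using congrArg f' (hf ⟨x, hx⟩)
  exact ⟨.ofLinearMap f f' right_inv left_inv, hf⟩

theorem bilinForm_preserved_of_smul_mem (ha : IsSMulRegular R a) (haN : ∀ x : M, a • x ∈ N)
    {B : LinearMap.BilinForm R M} {B' : LinearMap.BilinForm R M'} {f : M →ₗ[R] M'}
    (h : ∀ x ∈ N, ∀ y ∈ N, B' (f x) (f y) = B x y) (x y : M) : B' (f x) (f y) = B x y :=
  ha <| ha <| by simpa using h _ (haN x) _ (haN y)

end Extension

section EvenSublattice

variable {M : Type*} [AddCommGroup M] {B : LinearMap.BilinForm ℤ M} {w : M}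

/-- A characteristic vector of an integral form, that is, a vector `w` such that `x ⋅ x` and `w ⋅ x`
have the same parity for all `x`. It describes the even sublattice by a linear condition. -/
def IsCharacteristicVector (B : LinearMap.BilinForm ℤ M) (w : M) : Prop :=
  ∀ x, Even (B x x) ↔ Even (B w x)

/-- The norm `x ⋅ x` modulo 2, as an additive map: the cross terms `2 (x ⋅ y)` vanish. -/
def normModTwo (hB : B.IsSymm) : M →+ ZMod 2 where
  toFun x := B x x
  map_zero' := by simp
  map_add' x y := by
    have cross : (B x y : ZMod 2) + B x y = 0 := CharTwo.add_self_eq_zero _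
    simp only [map_add, LinearMap.add_apply, hB.eq y x, Int.cast_add]
    linear_combination cross

theorem even_apply_of_forall_even_norm (hB : B.IsSymm) (hw : IsCharacteristicVector B w)
    (hww : Odd (B w w)) {v : M} (hv : Even (B v v)) (h : ∀ z, Even (B z z) → Even (B v z)) (z : M) :
    Even (B v z) := by
  have hvw : Even (B v w) := hB.eq v w ▸ (hw v).1 hv
  by_cases hz : Even (B z z)
  · exact h z hz
  · have hzw : Even (B (z - w) (z - w)) := by
      rw [hw, map_sub]
      exact (Int.not_even_iff_odd.1 (mt (hw z).2 hz)).sub_odd hww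
    simpa using (h _ hzw).add hvw

variable {S : Submodule ℤ M}

theorem two_smul_mem_of_mem_iff_even (hS : ∀ x, x ∈ S ↔ Even (B x x)) (x : M) :
    (2 : ℤ) • x ∈ S := by
  simp [hS]

theorem even_apply_isometry_two_smul (hB : B.IsSymm) (hw : IsCharacteristicVector B w)
    (hww : Odd (B w w)) (hS : ∀ x, x ∈ S ↔ Even (B x x)) {g : S ≃ₗ[ℤ] S}
    (hg : ∀ x y : S, B (g x) (g y) = B x y) (x z : M) :
    Even (B (g ⟨(2 : ℤ) • x, two_smul_mem_of_mem_iff_even hS x⟩) z) := by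
  refine even_apply_of_forall_even_norm hB hw hww ((hS _).1 (g _).2) (fun z hz ↦ ?_) z
  have hgz := hg ⟨(2 : ℤ) • x, two_smul_mem_of_mem_iff_even hS x⟩ (g.symm ⟨z, (hS z).2 hz⟩)
  rw [g.apply_symm_apply] at hgz
  simp [hgz]

theorem existsUnique_isometry_extension [IsAddTorsionFree M] (hB : B.IsSymm)
    (hdiv : ∀ v, (∀ z, Even (B v z)) → ∃ y, (2 : ℤ) • y = v) (hw : IsCharacteristicVector B w)
    (hww : Odd (B w w)) (hS : ∀ x, x ∈ S ↔ Even (B x x)) (g : S ≃ₗ[ℤ] S)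
    (hg : ∀ x y : S, B (g x) (g y) = B x y) :
    ∃! f : {f : M ≃ₗ[ℤ] M // ∀ x y, B (f x) (f y) = B x y}, ∀ x : S, f.1 x = g x := by
  have two_regular : IsSMulRegular M (2 : ℤ) := smul_right_injective M two_ne_zero
  have two_mem := two_smul_mem_of_mem_iff_even hS
  have hg_symm (x y : S) : B (g.symm x) (g.symm y) = B x y := by
    rw [← hg, g.apply_symm_apply, g.apply_symm_apply]
  obtain ⟨f, hf⟩ := exists_linearEquiv_extension_of_smul_mem
    two_regular two_regular two_mem two_mem g
    (fun x ↦ hdiv _ (even_apply_isometry_two_smul hB hw hww hS hg x))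
    (fun x ↦ hdiv _ (even_apply_isometry_two_smul hB hw hww hS hg_symm x))
  have hfB : ∀ x y, B (f x) (f y) = B x y :=
    bilinForm_preserved_of_smul_mem (f := f.toLinearMap)
      (smul_right_injective ℤ two_ne_zero) two_mem
      fun x hx y hy ↦ by simpa [hf ⟨x, hx⟩, hf ⟨y, hy⟩] using hg ⟨x, hx⟩ ⟨y, hy⟩
  refine ⟨⟨f, hfB⟩, hf, fun k hk ↦ Subtype.ext <| LinearEquiv.toLinearMap_injective ?_⟩
  exact linearMap_eq_of_eqOn_of_smul_mem two_regular two_mem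
    fun x hx ↦ (hk ⟨x, hx⟩).trans (hf ⟨x, hx⟩).symm

end EvenSublattice

section GramMatrix

theorem exists_transpose_eq_neg_of_even_diag {ι : Type*} {G : Matrix ι ι ℤ} (hG : G.IsSymm)
    (hdiag : ∀ i, Even (G i i)) : ∃ K : Matrix ι ι ℤ, Kᵀ = -K ∧ ∀ i j, Even (G i j - K i j) := by
  classical
  let := linearOrderOfSTO (WellOrderingRel (α := ι))
  refine ⟨of fun i j ↦ if i < j then G i j else if j < i then -G i j else 0, ?_, fun i j ↦ ?_⟩
  · ext i j
    rcases lt_trichotomy i j with h | h | h <;> simp [h, h.not_gt, hG.apply i j]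
  · rcases lt_trichotomy i j with h | h | h
    · simp [h]
    · simp [h, hdiag]
    · simp [h, h.not_gt]

variable {ι R : Type*} [Fintype ι] [DecidableEq ι] [CommRing R]

theorem det_eq_zero_of_transpose_eq_neg [IsAddTorsionFree R] {A : Matrix ι ι R} (hA : Aᵀ = -A)
    (hι : Odd (Fintype.card ι)) : A.det = 0 := by
  have det_eq_neg : A.det = -A.det := by
    simpa [hA, det_neg, hι.neg_one_pow] using (det_transpose A).symm
  exact self_eq_neg.1 det_eq_neg

theorem det_add_vecMulVec_mulVec (A : Matrix ι ι R) (v w : ι → R) :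
    (A + vecMulVec (A *ᵥ v) w).det = A.det * (1 + w ⬝ᵥ v) := by
  have factor : A + vecMulVec (A *ᵥ v) w = A * (1 + vecMulVec v w) := by
    rw [mul_add, mul_one, mul_vecMulVec]
  rw [factor, det_mul, vecMulVec_eq Unit, det_one_add_replicateCol_mul_replicateRow]

variable {G : Matrix ι ι ℤ} {w : ι → ℤ}

theorem even_det_of_isSymm_of_even_diag (hG : G.IsSymm) (hdiag : ∀ i, Even (G i i))
    (hι : Odd (Fintype.card ι)) : Even G.det := by
  obtain ⟨K, hK, hGK⟩ := exists_transpose_eq_neg_of_even_diag hG hdiag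
  have map_eq : G.map (Int.cast : ℤ → ZMod 2) = K.map Int.cast := by
    ext i j
    simpa [sub_eq_zero] using (ZMod.intCast_eq_zero_iff_even).2 (hGK i j)
  rw [← ZMod.intCast_eq_zero_iff_even, Int.cast_det, map_eq, ← Int.cast_det,
    det_eq_zero_of_transpose_eq_neg hK hι, Int.cast_zero]

theorem zmod_two_norm_eq_dotProduct_diag (hG : G.IsSymm) (x : ι → ℤ) :
    (toBilin' G x x : ZMod 2) = (x ⬝ᵥ G.diag : ℤ) := by
  have single_eq (i : ι) : (fun j ↦ if i = j then (1 : ℤ) else 0) = Pi.single i 1 := by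
    ext j
    simp only [Pi.single_apply, eq_comm]
  have norm_single (i : ι) : toBilin' G (Pi.single i 1) (Pi.single i 1) = G i i := by
    simp [toBilin'_apply']
  have norm_eq_sum :=
    (normModTwo (isSymm_toBilin'_iff_isSymm.2 hG)).toIntLinearMap.pi_apply_eq_sum_univ x
  simpa [normModTwo, dotProduct, single_eq, norm_single] using norm_eq_sum

theorem exists_isCharacteristicVector (hG : G.IsSymm) (hdet : Odd G.det) :
    ∃ w, IsCharacteristicVector (toBilin' G) w := by
  refine ⟨G.adjugate *ᵥ G.diag, fun x ↦ ?_⟩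
  have apply_x : toBilin' G (G.adjugate *ᵥ G.diag) x = G.det * (x ⬝ᵥ G.diag) := by
    rw [(isSymm_toBilin'_iff_isSymm.2 hG).eq, toBilin'_apply', mulVec_mulVec, mul_adjugate,
      smul_mulVec, one_mulVec, dotProduct_smul, smul_eq_mul]
  rw [apply_x, ← ZMod.intCast_eq_zero_iff_even, zmod_two_norm_eq_dotProduct_diag hG,
    ZMod.intCast_eq_zero_iff_even, Int.even_mul, or_iff_right (Int.not_even_iff_odd.2 hdet)]

theorem odd_norm_of_isCharacteristicVector (hG : G.IsSymm) (hdet : Odd G.det)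
    (hι : Odd (Fintype.card ι)) (hw : IsCharacteristicVector (toBilin' G) w) :
    Odd (toBilin' G w w) := by
  have diag_iff (i : ι) : Even (G i i) ↔ Even ((G *ᵥ w) i) := by
    have hi := hw (Pi.single i 1)
    rw [(isSymm_toBilin'_iff_isSymm.2 hG).eq w] at hi
    simpa [toBilin'_apply'] using hi
  have isSymm : (G + vecMulVec (G *ᵥ w) (G *ᵥ w)).IsSymm :=
    hG.add (transpose_vecMulVec _ _)
  have even_det := even_det_of_isSymm_of_even_diag isSymm
    (fun i ↦ by simp [vecMulVec_apply, Int.even_add, Int.even_mul, diag_iff]) hι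
  rw [det_add_vecMulVec_mulVec, Int.even_mul, or_iff_right (Int.not_even_iff_odd.2 hdet),
    dotProduct_comm, ← toBilin'_apply'] at even_det
  simpa [Int.even_add] using even_det

theorem exists_two_smul_eq_of_forall_even (hdet : Odd G.det) (v : ι → ℤ)
    (h : ∀ z, Even (toBilin' G v z)) : ∃ y, (2 : ℤ) • y = v := by
  have even_apply (i : ι) : Even (v i) := by
    have hi := h (G.adjugate *ᵥ Pi.single i 1)
    rw [toBilin'_apply', mulVec_mulVec, mul_adjugate, smul_mulVec, one_mulVec, dotProduct_smul,
      dotProduct_single_one, smul_eq_mul, Int.even_mul] at hi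
    exact hi.resolve_left (Int.not_even_iff_odd.2 hdet)
  choose y hy using fun i ↦ (even_apply i).two_dvd
  exact ⟨y, funext fun i ↦ (hy i).symm⟩

end GramMatrix

theorem isometries_restrict_even_sublattice_general {n : ℕ} (hn : Odd n)
    {G : Matrix (Fin n) (Fin n) ℤ} (hG : G.IsSymm) (hdet : Odd G.det)
    (S : Submodule ℤ (Fin n → ℤ)) (hS : ∀ x, x ∈ S ↔ Even (bform G x x)) :
    (∀ f : (Fin n → ℤ) ≃ₗ[ℤ] (Fin n → ℤ), IsIsometry G f → ∀ x, f x ∈ S ↔ x ∈ S) ∧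
    (∀ g : S ≃ₗ[ℤ] S, (∀ x y : S, bform G (g x) (g y) = bform G x y) →
      ∃! f : {f : (Fin n → ℤ) ≃ₗ[ℤ] (Fin n → ℤ) // IsIsometry G f},
        ∀ x : S, (f : (Fin n → ℤ) ≃ₗ[ℤ] (Fin n → ℤ)) x = (g x : Fin n → ℤ)) := by
  have hcard : Odd (Fintype.card (Fin n)) := by rwa [Fintype.card_fin]
  obtain ⟨w, hw⟩ := exists_isCharacteristicVector hG hdet
  refine ⟨fun f hf x ↦ by rw [hS, hS, hf], fun g hg ↦ ?_⟩
  have hbform : bform G = fun x y ↦ toBilin' G x y := by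
    ext x y
    exact (toBilin'_apply' G x y).symm
  have hIsIsometry : IsIsometry G = fun f ↦ ∀ x y, toBilin' G (f x) (f y) = toBilin' G x y := by
    ext f
    simp only [IsIsometry, hbform]
  simp only [hbform] at hS hg
  rw [hIsIsometry]
  exact existsUnique_isometry_extension (isSymm_toBilin'_iff_isSymm.2 hG)
    (exists_two_smul_eq_of_forall_even hdet) hw
    (odd_norm_of_isCharacteristicVector hG hdet hcard hw) hS g hg

theorem dsum_isSymm {a b : ℕ} {A : Matrix (Fin a) (Fin a) ℤ} {B : Matrix (Fin b) (Fin b) ℤ}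
    (hA : A.IsSymm) (hB : B.IsSymm) : (dsum A B).IsSymm :=
  (hA.fromBlocks transpose_zero hB).reindex _

theorem det_dsum {a b : ℕ} (A : Matrix (Fin a) (Fin a) ℤ) (B : Matrix (Fin b) (Fin b) ℤ) :
    (dsum A B).det = A.det * B.det := by
  rw [dsum, det_reindex_self, det_fromBlocks_zero₂₁]

theorem latE8_eq_neg_cartanMatrix : latE8 = -CartanMatrix.E₈ := by
  decide

theorem gramT_isSymm : gramT.IsSymm := by
  refine dsum_isSymm (dsum_isSymm ?_ ?_) ?_
  · decide
  · decide
  · rw [latE8_eq_neg_cartanMatrix]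
    exact CartanMatrix.E₈_isSymm.neg

theorem det_gramT : gramT.det = -1 := by
  have det_latE8 : latE8.det = 1 := by
    rw [latE8_eq_neg_cartanMatrix, det_neg, CartanMatrix.E₈_det]
    norm_num
  rw [gramT, det_dsum, det_dsum, det_latE8]
  simp

/-- Every isometry of the odd unimodular lattice `T = ⟨1⟩ ⊕ U ⊕ E8` maps the even sublattice
`T₀` onto itself, and restriction `O(T) → O(T₀)` is bijective: every isometry of `T₀`
is the restriction of a unique isometry of `T` (so restriction is a group isomorphism). -/
theorem isometries_restrict_even_sublattice
    (S : Submodule ℤ (Fin 11 → ℤ)) (hS : ∀ x, x ∈ S ↔ Even (bform gramT x x)) :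
    (∀ f : (Fin 11 → ℤ) ≃ₗ[ℤ] (Fin 11 → ℤ), IsIsometry gramT f →
      ∀ x, f x ∈ S ↔ x ∈ S) ∧
    (∀ g : S ≃ₗ[ℤ] S, (∀ x y : S, bform gramT (g x) (g y) = bform gramT x y) →
      ∃! f : {f : (Fin 11 → ℤ) ≃ₗ[ℤ] (Fin 11 → ℤ) // IsIsometry gramT f},
        ∀ x : S, (f : (Fin 11 → ℤ) ≃ₗ[ℤ] (Fin 11 → ℤ)) x = (g x : Fin 11 → ℤ)) :=
  isometries_restrict_even_sublattice_general (by decide) gramT_isSymm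
    (by rw [det_gramT]; decide) S hS
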